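/- Let s be a positive integer and λ > 0. Let v : ℝ → ℂ be a smooth function that is bounded on [0, ∞), satisfies L_λ^s v = 0 on [0, ∞) where L_λ w := λ² w − w'', and satisfies the boundary conditions B_{s,ℓ} v(0) = 0 for all ℓ = 0, 1, …, s−1, where B_{s,ℓ} v := ∑_{k=0}^{s−1−ℓ} (−1)^k binom(s, ℓ+k+1) λ^{2(s−1−ℓ−k)} v^{(ℓ+2k+1)}. Then v(x) = 0 for all x ≥ 0. -/

import Mathlib

/-- The ordinary differential operator `L_λ w := λ² w - w''`. -/
noncomputable def Llam (lam : ℝ) (w : ℝ → ℂ) : ℝ → ℂ :=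
  fun x => (lam : ℂ) ^ 2 * w x - iteratedDeriv 2 w x

/-- The boundary operator
`B_{s,ℓ} v := ∑_{k=0}^{s-1-ℓ} (-1)^k C(s, ℓ+k+1) λ^{2(s-1-ℓ-k)} v^{(ℓ+2k+1)}`. -/
noncomputable def Bop (lam : ℝ) (s ℓ : ℕ) (v : ℝ → ℂ) : ℝ → ℂ :=
  fun x => ∑ k ∈ Finset.range (s - 1 - ℓ + 1),
    (-1 : ℂ) ^ k * (s.choose (ℓ + k + 1) : ℂ) * (lam : ℂ) ^ (2 * (s - 1 - ℓ - k)) *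
      iteratedDeriv (ℓ + 2 * k + 1) v x

/-!
Growth `o(e^{λx})` discards the growing half of the exponential polynomials solving
`(λ² - D²)^s v = 0`, so `v` and all its derivatives tend to `0` at infinity. Write
`L_λ^s = ∑ (-1)^j c_j D^{2j}` with `c_j ≥ 0` and `c_0 > 0`, and put `A_0 = L_λ^s` and
`A_{ℓ+1} = B_{s,ℓ}`. The recursion `(A_{m+1} v)' = c_m v^{(m)} - A_m v` makes the derivative of
`∑_{ℓ<s} B_{s,ℓ} v · conj v^{(ℓ)}` telescope to
`∑_{m≤s} c_m |v^{(m)}|² - L_λ^s v · conj v`. For a solution the real part of this sum is therefore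
nondecreasing; it vanishes at `0` and at infinity, hence identically, and `c_0 |v|² = 0`.
-/

open Polynomial Filter Topology Asymptotics Set
open scoped ContDiff ComplexConjugate

section InvariantSubmodule

variable {R M : Type*} [CommRing R] [AddCommGroup M] [Module R M]
  {T : Module.End R M} {N : Submodule R M}

theorem aeval_apply_mem_of_mem_invtSubmodule (hN : N ∈ T.invtSubmodule) (p : R[X]) {m : M}
    (hm : m ∈ N) : aeval T p m ∈ N := by
  rw [aeval_eq_sum_range, LinearMap.sum_apply]
  exact N.sum_mem fun i _ =>
    N.smul_mem _ (Module.End.pow_apply_mem_of_forall_mem i hN m hm)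

theorem exists_add_eq_of_aeval_mul_apply_mem (hN : N ∈ T.invtSubmodule) {p q : R[X]}
    (hpq : IsCoprime p q) {m : M} (hm : aeval T (p * q) m ∈ N) :
    ∃ y z, y + z = m ∧ aeval T p y ∈ N ∧ aeval T q z ∈ N := by
  obtain ⟨a, b, hab⟩ := hpq
  refine ⟨aeval T (b * q) m, aeval T (a * p) m, ?_, ?_, ?_⟩
  · rw [← LinearMap.add_apply, ← map_add, add_comm, hab, map_one, Module.End.one_apply]
  · rw [← Module.End.mul_apply, ← map_mul, mul_left_comm, map_mul, Module.End.mul_apply]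
    exact aeval_apply_mem_of_mem_invtSubmodule hN b hm
  · rw [← Module.End.mul_apply, ← map_mul, mul_left_comm, mul_comm q p, map_mul,
      Module.End.mul_apply]
    exact aeval_apply_mem_of_mem_invtSubmodule hN a hm

end InvariantSubmodule

section ExponentialPolynomial

theorem derivative_surjective {K : Type*} [Field K] [CharZero K] :
    Function.Surjective (derivative : K[X] →ₗ[K] K[X]) := by
  intro q
  induction q using Polynomial.induction_on' with
  | add p q hp hq =>
    obtain ⟨P, rfl⟩ := hp
    obtain ⟨Q, rfl⟩ := hq
    exact ⟨P + Q, map_add _ P Q⟩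
  | monomial n a =>
    refine ⟨monomial (n + 1) (a / (n + 1)), ?_⟩
    rw [derivative_monomial, Nat.add_sub_cancel, Nat.cast_add_one,
      div_mul_cancel₀ a n.cast_add_one_ne_zero]

theorem eq_zero_of_tendsto_eval_zero {α K : Type*} [NormedField K] {l : Filter α} [l.NeBot]
    {z : α → K} (hz : Tendsto (fun x => ‖z x‖) l atTop) {p : K[X]}
    (hp : Tendsto (fun x => p.eval (z x)) l (𝓝 0)) : p = 0 := by
  by_cases hdeg : 0 < degree p
  · exact absurd hp.norm
      (not_tendsto_nhds_of_tendsto_atTop (p.tendsto_norm_atTop hdeg hz) _)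
  · rw [eq_C_of_degree_le_zero (not_lt.1 hdeg)] at hp ⊢
    simp only [eval_C] at hp
    rw [tendsto_nhds_unique tendsto_const_nhds hp, C_0]

theorem tendsto_eval_mul_exp_neg_atTop_nhds_zero {b : ℝ} (hb : 0 < b) (p : ℂ[X]) :
    Tendsto (fun x : ℝ => p.eval (x : ℂ) * Complex.exp (-b * x)) atTop (𝓝 0) := by
  induction p using Polynomial.induction_on' with
  | add p q hp hq => simpa only [eval_add, add_mul, add_zero] using hp.add hq
  | monomial n a =>
    have hreal := tendsto_rpow_mul_exp_neg_mul_atTop_nhds_zero n b hb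
    have hcomplex := ((Complex.continuous_ofReal.tendsto 0).comp hreal).const_mul a
    simpa [Function.comp_def, mul_assoc] using hcomplex

theorem isLittleO_exp_of_isBigO_one {E : Type*} [SeminormedAddCommGroup E] {v : ℝ → E} {b : ℝ}
    (hb : 0 < b) (hv : v =O[atTop] fun _ => (1 : ℝ)) :
    v =o[atTop] fun x => Real.exp (b * x) :=
  hv.trans_isLittleO <| isLittleO_const_left.2 <| .inr <| tendsto_norm_atTop_atTop.comp <|
    Real.tendsto_exp_atTop.comp <| tendsto_id.const_mul_atTop hb

theorem eq_zero_of_eval_mul_exp_isLittleO {b : ℝ} {p : ℂ[X]}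
    (hp : (fun x : ℝ => p.eval (x : ℂ) * Complex.exp (b * x)) =o[atTop]
      fun x => Real.exp (b * x)) : p = 0 := by
  refine eq_zero_of_tendsto_eval_zero (z := fun x : ℝ => (x : ℂ)) (l := atTop)
    (by simpa using tendsto_abs_atTop_atTop) (tendsto_zero_iff_norm_tendsto_zero.2 ?_)
  refine ((isLittleO_iff_tendsto fun x hx => absurd hx (Real.exp_ne_zero _)).1
    hp.norm_left).congr fun x => ?_
  simp [Complex.norm_exp]

theorem exp_mul_mul_exp_neg_mul (a z : ℂ) : Complex.exp (a * z) * Complex.exp (-a * z) = 1 := by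
  rw [← Complex.exp_add, neg_mul, add_neg_cancel, Complex.exp_zero]

theorem hasDerivAt_mul_exp_neg {f : ℝ → ℂ} {f' : ℂ} {x : ℝ} (hf : HasDerivAt f f' x) (a : ℂ) :
    HasDerivAt (fun y : ℝ => f y * Complex.exp (-a * y))
      ((f' - a * f x) * Complex.exp (-a * x)) x := by
  have hexp : HasDerivAt (fun y : ℝ => Complex.exp (-a * y))
      (Complex.exp (-a * x) * (-a * 1)) x :=
    ((hasDerivAt_id (x : ℂ)).const_mul (-a)).cexp.comp_ofReal
  exact (hf.fun_mul hexp).congr_deriv (by ring)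

end ExponentialPolynomial

section SmoothFunctions

/-- The space of smooth functions `ℝ → ℂ`, on which constant-coefficient differential operators
act as polynomials in `smoothDeriv`. -/
def smoothFunctions : Submodule ℂ (ℝ → ℂ) where
  carrier := {f | ContDiff ℝ ∞ f}
  add_mem' {f g} (hf : ContDiff ℝ ∞ f) (hg : ContDiff ℝ ∞ g) := hf.add hg
  zero_mem' := show ContDiff ℝ ∞ (fun _ : ℝ => (0 : ℂ)) from contDiff_const
  smul_mem' c f (hf : ContDiff ℝ ∞ f) := hf.const_smul c

theorem smoothFunctions_contDiff (f : smoothFunctions) : ContDiff ℝ ∞ f.1 := f.2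

theorem smoothFunctions_differentiable (f : smoothFunctions) : Differentiable ℝ f.1 :=
  (smoothFunctions_contDiff f).differentiable (by simp)

/-- Differentiation, as an endomorphism of the space of smooth functions. -/
noncomputable def smoothDeriv : Module.End ℂ smoothFunctions where
  toFun f := ⟨deriv f.1, (contDiff_infty_iff_deriv.1 (smoothFunctions_contDiff f)).2⟩
  map_add' f g := Subtype.ext <| funext fun x =>
    deriv_add (smoothFunctions_differentiable f x) (smoothFunctions_differentiable g x)
  map_smul' c f := Subtype.ext <| funext fun x =>
    deriv_const_smul c (smoothFunctions_differentiable f x)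

theorem coe_smoothDeriv_pow (n : ℕ) (f : smoothFunctions) :
    ((smoothDeriv ^ n) f).1 = iteratedDeriv n f.1 := by
  induction n with
  | zero => simp
  | succ n ih => rw [pow_succ', iteratedDeriv_succ, ← ih]; rfl

theorem coe_aeval_smoothDeriv_X_sub_C (a : ℂ) (f : smoothFunctions) (x : ℝ) :
    (aeval smoothDeriv (X - C a) f).1 x = deriv f.1 x - a * f.1 x := by
  simp [Module.algebraMap_end_apply, smoothDeriv]

/-- The smooth functions on `ℝ` that vanish on `S`: a smooth function solves `P(D) f = 0` on `S`
exactly when `aeval smoothDeriv P f` belongs to this submodule. -/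
def smoothVanishingOn (S : Set ℝ) : Submodule ℂ smoothFunctions where
  carrier := {f | EqOn f.1 0 S}
  add_mem' {f g} hf hg x hx := by simp [hf hx, hg hx]
  zero_mem' _ _ := rfl
  smul_mem' c f hf x hx := by simp [hf hx]

theorem smoothVanishingOn_mem_invtSubmodule {S : Set ℝ} (hS : UniqueDiffOn ℝ S) :
    smoothVanishingOn S ∈ smoothDeriv.invtSubmodule := by
  intro f hf x hx
  calc deriv f.1 x = derivWithin f.1 S x :=
        ((smoothFunctions_differentiable f x).derivWithin (hS x hx)).symm
    _ = derivWithin 0 S x := derivWithin_congr hf (hf hx)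
    _ = 0 := by simp

theorem exists_eqOn_eval_mul_exp {S : Set ℝ} (hS : Convex ℝ S) {a : ℂ} {n : ℕ}
    {f : smoothFunctions} (hf : aeval smoothDeriv ((X - C a) ^ n) f ∈ smoothVanishingOn S) :
    ∃ p : ℂ[X], EqOn f.1 (fun x : ℝ => p.eval (x : ℂ) * Complex.exp (a * x)) S := by
  induction n generalizing f with
  | zero => exact ⟨0, fun x hx => by simpa using hf hx⟩
  | succ n ih =>
    obtain rfl | ⟨x₀, hx₀⟩ := S.eq_empty_or_nonempty
    · exact ⟨0, eqOn_empty _ _⟩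
    rw [pow_succ, map_mul] at hf
    obtain ⟨q, hq⟩ := ih hf
    obtain ⟨Q, rfl⟩ := derivative_surjective q
    set g : ℝ → ℂ := fun x => f.1 x * Complex.exp (-a * x) - Q.eval (x : ℂ) with hg
    have hderiv : ∀ x ∈ S, HasDerivWithinAt g 0 S x := fun x hx => by
      have hfx := hasDerivAt_mul_exp_neg (smoothFunctions_differentiable f x).hasDerivAt a
      refine ((hfx.sub (Q.hasDerivAt (x : ℂ)).comp_ofReal).congr_deriv ?_).hasDerivWithinAt
      rw [← coe_aeval_smoothDeriv_X_sub_C, hq hx]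
      linear_combination (derivative Q).eval (x : ℂ) * exp_mul_mul_exp_neg_mul a x
    refine ⟨Q + C (g x₀), fun x hx => ?_⟩
    have hconst : g x = g x₀ := by
      simpa [sub_eq_zero] using
        hS.norm_image_sub_le_of_norm_hasDerivWithin_le hderiv (C := 0) (by simp) hx₀ hx
    rw [← hconst, hg]
    simp only [eval_add, eval_C]
    linear_combination -f.1 x * exp_mul_mul_exp_neg_mul a x

variable {b a : ℝ} {f : smoothFunctions}

theorem tendsto_zero_of_aeval_X_add_C_pow_mem (hb : 0 < b) {n : ℕ}
    (hf : aeval smoothDeriv ((X + C (b : ℂ)) ^ n) f ∈ smoothVanishingOn (Ici a)) :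
    Tendsto f.1 atTop (𝓝 0) := by
  rw [← sub_neg_eq_add, ← C_neg] at hf
  obtain ⟨p, hp⟩ := exists_eqOn_eval_mul_exp (convex_Ici a) hf
  refine (tendsto_eval_mul_exp_neg_atTop_nhds_zero hb p).congr' ?_
  filter_upwards [Ici_mem_atTop a] with x hx using (hp hx).symm

theorem aeval_X_add_C_pow_mem_of_isLittleO (hb : 0 < b) {s : ℕ}
    (hf : aeval smoothDeriv ((C ((b : ℂ) ^ 2) - X ^ 2) ^ s) f ∈ smoothVanishingOn (Ici a))
    (hgrowth : f.1 =o[atTop] fun x => Real.exp (b * x)) :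
    aeval smoothDeriv ((X + C (b : ℂ)) ^ s) f ∈ smoothVanishingOn (Ici a) := by
  have hinv := smoothVanishingOn_mem_invtSubmodule (uniqueDiffOn_Ici a)
  have hcoprime : IsCoprime ((X - C (b : ℂ)) ^ s) ((X + C (b : ℂ)) ^ s) := by
    rw [← sub_neg_eq_add X, ← C_neg]
    refine (isCoprime_X_sub_C_of_isUnit_sub (isUnit_iff_ne_zero.2 ?_)).pow
    rw [sub_neg_eq_add, ← two_mul]
    exact mul_ne_zero two_ne_zero (Complex.ofReal_ne_zero.2 hb.ne')
  have hfactor : (X - C (b : ℂ)) ^ s * (X + C (b : ℂ)) ^ s =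
      (-1) ^ s * (C ((b : ℂ) ^ 2) - X ^ 2) ^ s := by
    rw [← mul_pow, ← mul_pow, C_pow]
    ring
  obtain ⟨g, h, rfl, hg, hh⟩ := exists_add_eq_of_aeval_mul_apply_mem hinv hcoprime (m := f) (by
    rw [hfactor, map_mul]
    exact aeval_apply_mem_of_mem_invtSubmodule hinv _ hf)
  obtain ⟨p, hp⟩ := exists_eqOn_eval_mul_exp (convex_Ici a) hg
  have hh_growth := isLittleO_exp_of_isBigO_one hb
    ((tendsto_zero_of_aeval_X_add_C_pow_mem hb hh).isBigO_one ℝ)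
  have hg_growth : g.1 =o[atTop] fun x => Real.exp (b * x) := by
    simpa using hgrowth.sub hh_growth
  have hp_zero : p = 0 := eq_zero_of_eval_mul_exp_isLittleO <|
    hg_growth.congr' (hp.eventuallyEq_of_mem (Ici_mem_atTop a)) .rfl
  have hg_mem : g ∈ smoothVanishingOn (Ici a) := fun x hx => by simp [hp hx, hp_zero]
  rw [map_add]
  exact add_mem (aeval_apply_mem_of_mem_invtSubmodule hinv _ hg_mem) hh

theorem tendsto_iteratedDeriv_of_isLittleO (hb : 0 < b) {s : ℕ}
    (hf : aeval smoothDeriv ((C ((b : ℂ) ^ 2) - X ^ 2) ^ s) f ∈ smoothVanishingOn (Ici a))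
    (hgrowth : f.1 =o[atTop] fun x => Real.exp (b * x)) (n : ℕ) :
    Tendsto (iteratedDeriv n f.1) atTop (𝓝 0) := by
  rw [← coe_smoothDeriv_pow]
  refine tendsto_zero_of_aeval_X_add_C_pow_mem (a := a) hb (n := s) ?_
  rw [← aeval_X_pow (R := ℂ) smoothDeriv, ← Module.End.mul_apply, ← map_mul, mul_comm, map_mul]
  exact aeval_apply_mem_of_mem_invtSubmodule
    (smoothVanishingOn_mem_invtSubmodule (uniqueDiffOn_Ici a)) _
    (aeval_X_add_C_pow_mem_of_isLittleO hb hf hgrowth)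

end SmoothFunctions

theorem hasDerivAt_iteratedDeriv {𝕜 F : Type*} [NontriviallyNormedField 𝕜]
    [NormedAddCommGroup F] [NormedSpace 𝕜 F] {v : 𝕜 → F} (hv : ContDiff 𝕜 ∞ v) (n : ℕ) (x : 𝕜) :
    HasDerivAt (iteratedDeriv n v) (iteratedDeriv (n + 1) v x) x := by
  rw [iteratedDeriv_succ]
  exact (hv.differentiable_iteratedDeriv n (mod_cast WithTop.coe_lt_top _) x).hasDerivAt

theorem eqOn_zero_of_hasDerivWithinAt_nonneg_of_tendsto {f f' : ℝ → ℝ} {a : ℝ}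
    (hf : ∀ x ∈ Ici a, HasDerivWithinAt f (f' x) (Ici a) x) (hf' : ∀ x ∈ Ici a, 0 ≤ f' x)
    (hlim : Tendsto f atTop (𝓝 (f a))) : EqOn f' 0 (Ici a) := by
  have hmono : MonotoneOn f (Ici a) :=
    monotoneOn_of_hasDerivWithinAt_nonneg (convex_Ici a)
      (fun x hx => (hf x hx).continuousWithinAt)
      (fun x hx => (hf x (interior_subset hx)).mono interior_subset)
      (fun x hx => hf' x (interior_subset hx))
  have hconst : EqOn f (fun _ => f a) (Ici a) := fun x hx => by
    refine le_antisymm (ge_of_tendsto hlim ?_) (hmono self_mem_Ici hx hx)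
    filter_upwards [Ici_mem_atTop x] with y hy
    exact hmono hx (Ici_subset_Ici.2 hx hy) hy
  exact fun x hx => (uniqueDiffOn_Ici a x hx).eq_deriv _ (hf x hx)
    ((hasDerivWithinAt_const x _ (f a)).congr hconst (hconst hx))

section GreenFormula

variable {c : ℕ → ℝ} {s : ℕ} {v : ℝ → ℂ} {a : ℝ}

/-- The operator `∑_{j=m}^{s} (-1)^{j-m} c_j D^{2j-m}`, which integration by parts leaves on `v`
after moving `m` derivatives of `P(D) = ∑_{j≤s} (-1)^j c_j D^{2j}` onto the other factor. For
`m = 0` it is `P(D)` itself; for `1 ≤ m ≤ s` it is the `(m-1)`-st natural boundary operator of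
`P(D)`. -/
noncomputable def conormalOperator (c : ℕ → ℝ) (s m : ℕ) (v : ℝ → ℂ) (x : ℝ) : ℂ :=
  ∑ k ∈ Finset.range (s + 1 - m), (-1) ^ k * c (m + k) * iteratedDeriv (m + 2 * k) v x

theorem conormalOperator_self (c : ℕ → ℝ) (s : ℕ) (v : ℝ → ℂ) (x : ℝ) :
    conormalOperator c s s v x = c s * iteratedDeriv s v x := by
  simp [conormalOperator]

theorem hasDerivAt_conormalOperator_succ (hv : ContDiff ℝ ∞ v) {m : ℕ} (hm : m ≤ s) (x : ℝ) :
    HasDerivAt (conormalOperator c s (m + 1) v)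
      (c m * iteratedDeriv m v x - conormalOperator c s m v x) x := by
  have hterm := HasDerivAt.fun_sum (u := Finset.range (s + 1 - (m + 1))) fun k _ =>
    (hasDerivAt_iteratedDeriv hv (m + 1 + 2 * k) x).const_mul ((-1) ^ k * (c (m + 1 + k) : ℂ))
  refine hterm.congr_deriv ?_
  rw [conormalOperator, show s + 1 - m = s + 1 - (m + 1) + 1 by lia, Finset.sum_range_succ']
  simp only [pow_zero, mul_zero, add_zero, one_mul, sub_add_cancel_right,
    ← Finset.sum_neg_distrib]
  refine Finset.sum_congr rfl fun k _ => ?_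
  rw [show m + 1 + 2 * k + 1 = m + 2 * (k + 1) by lia, show m + 1 + k = m + (k + 1) by lia]
  ring

/-- The boundary form of Green's formula, whose derivative compares `conj v * P(D) v` with the
energy density `∑_{m≤s} c_m |v^{(m)}|²`. -/
noncomputable def greenForm (c : ℕ → ℝ) (s : ℕ) (v : ℝ → ℂ) (x : ℝ) : ℂ :=
  ∑ m ∈ Finset.range s, conormalOperator c s (m + 1) v x * conj (iteratedDeriv m v x)

theorem hasDerivAt_greenForm (hv : ContDiff ℝ ∞ v) (x : ℝ) :
    HasDerivAt (greenForm c s v)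
      (((∑ m ∈ Finset.range (s + 1), c m * ‖iteratedDeriv m v x‖ ^ 2 : ℝ) : ℂ) -
        conormalOperator c s 0 v x * conj (v x)) x := by
  set F : ℕ → ℂ := fun m => conormalOperator c s m v x * conj (iteratedDeriv m v x) with hF
  have hterm : ∀ m ∈ Finset.range s,
      HasDerivAt (fun y => conormalOperator c s (m + 1) v y * conj (iteratedDeriv m v y))
        ((c m * ‖iteratedDeriv m v x‖ ^ 2 : ℝ) + (F (m + 1) - F m)) x := fun m hm => by
    refine ((hasDerivAt_conormalOperator_succ hv (Finset.mem_range.1 hm).le x).fun_mul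
      (hasDerivAt_iteratedDeriv hv m x).star).congr_deriv ?_
    push_cast
    simp only [hF, ← Complex.mul_conj', starRingEnd_apply]
    ring
  refine (HasDerivAt.fun_sum hterm).congr_deriv ?_
  rw [Finset.sum_add_distrib, Finset.sum_range_sub, Finset.sum_range_succ]
  push_cast
  simp only [hF, conormalOperator_self, ← Complex.mul_conj', iteratedDeriv_zero]
  ring

theorem tendsto_greenForm_zero (hv : ∀ n, Tendsto (iteratedDeriv n v) atTop (𝓝 0)) :
    Tendsto (greenForm c s v) atTop (𝓝 0) := by
  have hconormal (m : ℕ) : Tendsto (conormalOperator c s m v) atTop (𝓝 0) := by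
    have hsum := tendsto_finsetSum (Finset.range (s + 1 - m)) fun k _ =>
      (hv (m + 2 * k)).const_mul ((-1) ^ k * (c (m + k) : ℂ))
    simp only [mul_zero, Finset.sum_const_zero] at hsum
    exact hsum
  have hsum := tendsto_finsetSum (Finset.range s) fun m _ =>
    (hconormal (m + 1)).mul ((Complex.continuous_conj.tendsto 0).comp (hv m))
  simp only [zero_mul, Finset.sum_const_zero] at hsum
  exact hsum

theorem eqOn_zero_of_conormalOperator_eq_zero (hc : ∀ m, 0 ≤ c m) (hc₀ : c 0 ≠ 0)
    (hv : ContDiff ℝ ∞ v) (hode : ∀ x ∈ Ici a, conormalOperator c s 0 v x = 0)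
    (hbc : ∀ m < s, conormalOperator c s (m + 1) v a = 0)
    (hdecay : ∀ n, Tendsto (iteratedDeriv n v) atTop (𝓝 0)) : EqOn v 0 (Ici a) := by
  set energy : ℝ → ℝ := fun x =>
    ∑ m ∈ Finset.range (s + 1), c m * ‖iteratedDeriv m v x‖ ^ 2
  have hterm_nonneg (x : ℝ) (m : ℕ) : 0 ≤ c m * ‖iteratedDeriv m v x‖ ^ 2 :=
    mul_nonneg (hc m) (sq_nonneg _)
  have hderiv : ∀ x ∈ Ici a,
      HasDerivWithinAt (fun y => (greenForm c s v y).re) (energy x) (Ici a) x := fun x hx => by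
    have hgreen := hasDerivAt_greenForm (c := c) (s := s) hv x
    rw [hode x hx, zero_mul, sub_zero] at hgreen
    exact (Complex.reCLM.hasFDerivAt.comp_hasDerivAt x hgreen).hasDerivWithinAt
  have hgreen_a : greenForm c s v a = 0 :=
    Finset.sum_eq_zero fun m hm => by rw [hbc m (Finset.mem_range.1 hm), zero_mul]
  have hgreen_lim : Tendsto (fun y => (greenForm c s v y).re) atTop
      (𝓝 (greenForm c s v a).re) := by
    rw [hgreen_a]
    exact (Complex.continuous_re.tendsto 0).comp (tendsto_greenForm_zero hdecay)
  have henergy_zero : EqOn energy 0 (Ici a) :=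
    eqOn_zero_of_hasDerivWithinAt_nonneg_of_tendsto hderiv
      (fun x _ => Finset.sum_nonneg fun m _ => hterm_nonneg x m) hgreen_lim
  intro x hx
  have hv_zero : c 0 * ‖iteratedDeriv 0 v x‖ ^ 2 = 0 :=
    (Finset.sum_eq_zero_iff_of_nonneg fun m _ => hterm_nonneg x m).1 (henergy_zero hx) 0
      (by simp)
  simpa [hc₀] using hv_zero

end GreenFormula

section IteratedOperator

/-- The coefficients `c_j = C(s, j) λ^{2(s-j)}` in `L_λ^s = ∑_{j≤s} (-1)^j c_j D^{2j}`. -/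
noncomputable def llamCoeff (lam : ℝ) (s j : ℕ) : ℝ :=
  s.choose j * lam ^ (2 * (s - j))

theorem llamCoeff_nonneg (lam : ℝ) (s j : ℕ) : 0 ≤ llamCoeff lam s j :=
  mul_nonneg (Nat.cast_nonneg _) ((even_two_mul _).pow_nonneg lam)

theorem coe_aeval_smoothDeriv_eq_iterate_Llam (lam : ℝ) (s : ℕ) (f : smoothFunctions) :
    (aeval smoothDeriv ((C ((lam : ℂ) ^ 2) - X ^ 2) ^ s) f).1 = (Llam lam)^[s] f.1 := by
  have hL (g : smoothFunctions) :
      (aeval smoothDeriv (C ((lam : ℂ) ^ 2) - X ^ 2) g).1 = Llam lam g.1 := by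
    rw [map_sub, aeval_X_pow, aeval_C, LinearMap.sub_apply, Module.algebraMap_end_apply]
    ext x
    simp [Llam, coe_smoothDeriv_pow]
  induction s with
  | zero => simp
  | succ s ih =>
    rw [Function.iterate_succ_apply', ← ih, pow_succ', map_mul, Module.End.mul_apply, hL]

theorem sq_sub_X_sq_pow_eq_sum (lam : ℝ) (s : ℕ) :
    (C ((lam : ℂ) ^ 2) - X ^ 2) ^ s = ∑ j ∈ Finset.range (s + 1),
      C ((-1) ^ j * (llamCoeff lam s j : ℂ)) * X ^ (2 * j) := by
  rw [sub_eq_neg_add, add_pow]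
  refine Finset.sum_congr rfl fun j _ => ?_
  rw [neg_pow, llamCoeff]
  push_cast
  simp only [pow_mul, C_mul, C_pow, C_neg, C_1, map_natCast]
  ring

theorem iterate_Llam_eq_conormalOperator (lam : ℝ) (s : ℕ) {v : ℝ → ℂ} (hv : ContDiff ℝ ∞ v) :
    (Llam lam)^[s] v = conormalOperator (llamCoeff lam s) s 0 v := by
  rw [← coe_aeval_smoothDeriv_eq_iterate_Llam lam s ⟨v, hv⟩, sq_sub_X_sq_pow_eq_sum, map_sum,
    LinearMap.sum_apply, Submodule.coe_sum]
  ext x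
  rw [Finset.sum_apply, conormalOperator, Nat.sub_zero]
  refine Finset.sum_congr rfl fun j _ => ?_
  rw [map_mul, aeval_C, aeval_X_pow, Module.End.mul_apply, Module.algebraMap_end_apply,
    Submodule.coe_smul, coe_smoothDeriv_pow, Pi.smul_apply, smul_eq_mul, zero_add, zero_add]

theorem Bop_eq_conormalOperator (lam : ℝ) {s l : ℕ} (hl : l < s) (v : ℝ → ℂ) :
    Bop lam s l v = conormalOperator (llamCoeff lam s) s (l + 1) v := by
  ext x
  rw [Bop, conormalOperator, show s - 1 - l + 1 = s + 1 - (l + 1) by lia]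
  refine Finset.sum_congr rfl fun k _ => ?_
  rw [llamCoeff, show s - 1 - l - k = s - (l + 1 + k) by lia, add_right_comm l k 1,
    add_right_comm l (2 * k) 1]
  push_cast
  ring

end IteratedOperator

theorem bounded_solution_with_boundary_conditions_eq_zero_general (s : ℕ) (lam : ℝ)
    (hlam : 0 < lam) (v : ℝ → ℂ) (hsmooth : ContDiff ℝ ∞ v)
    (hgrowth : v =o[atTop] fun x => Real.exp (lam * x))
    (hode : ∀ x : ℝ, 0 ≤ x → (Llam lam)^[s] v x = 0)
    (hbc : ∀ ℓ < s, Bop lam s ℓ v 0 = 0) :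
    ∀ x : ℝ, 0 ≤ x → v x = 0 := by
  have hmem : aeval smoothDeriv ((C ((lam : ℂ) ^ 2) - X ^ 2) ^ s) ⟨v, hsmooth⟩ ∈
      smoothVanishingOn (Ici 0) := fun x hx => by
    rw [coe_aeval_smoothDeriv_eq_iterate_Llam]
    exact hode x hx
  refine eqOn_zero_of_conormalOperator_eq_zero (s := s) (llamCoeff_nonneg lam s)
    (by simp [llamCoeff, hlam.ne']) hsmooth ?_ ?_
    (tendsto_iteratedDeriv_of_isLittleO hlam hmem hgrowth)
  · rwa [← iterate_Llam_eq_conormalOperator lam s hsmooth]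
  · intro l hl
    rw [← Bop_eq_conormalOperator lam hl]
    exact hbc l hl

/-- core of Lemma 3.6. Let `s ≥ 1` and `λ > 0`. If `v : ℝ → ℂ` is
smooth, bounded on `[0, ∞)`, satisfies `L_λ^s v = 0` on `[0, ∞)` and the boundary
conditions `B_{s,ℓ} v (0) = 0` for `ℓ = 0, …, s-1`, then `v` vanishes on `[0, ∞)`. -/
theorem bounded_solution_with_boundary_conditions_eq_zero (s : ℕ) (hs : 1 ≤ s)
    (lam : ℝ) (hlam : 0 < lam)
    (v : ℝ → ℂ) (hsmooth : ContDiff ℝ (⊤ : ℕ∞) v)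
    (hbdd : ∃ M : ℝ, ∀ x : ℝ, 0 ≤ x → ‖v x‖ ≤ M)
    (hode : ∀ x : ℝ, 0 ≤ x → (Llam lam)^[s] v x = 0)
    (hbc : ∀ ℓ < s, Bop lam s ℓ v 0 = 0) :
    ∀ x : ℝ, 0 ≤ x → v x = 0 := by
  obtain ⟨M, hM⟩ := hbdd
  exact bounded_solution_with_boundary_conditions_eq_zero_general s lam hlam v hsmooth
    (isLittleO_exp_of_isBigO_one hlam <| (isBigO_one_iff ℝ).2 <|
      isBoundedUnder_of_eventually_le <| (eventually_ge_atTop 0).mono hM) hode hbc
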